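/- Let 0 ≤ ε < 1, r_ε = 1 − ε, t_ε = φ(r_ε), and let D ⊂ ℝ^{2n+1} be an open set contained in {(z,t) : 0 < |z| < r_ε, t_ε < t < φ(|z|)}. Suppose u : D → ℝ is of class C¹ and satisfies u(z,t) > 1 and u(z,t)²·(φ(|z|/u(z,t)) − φ(r_ε/u(z,t))) = t − t_ε for all (z,t) ∈ D. Then at every point of D, writing r = |z| and s = u(z,t): (i) ∂_t u = 1/( s·(ψ(r/s) − ψ(r_ε/s)) ); (ii) ∂_{x_j} u = 2x_j·(r/√(s²−r²))·∂_t u and ∂_{y_j} u = 2y_j·(r/√(s²−r²))·∂_t u for j = 1,…,n; (iii) the squared norm of the horizontal gradient satisfies |∇_H u|² = Σ_{j=1}^n ((∂_{x_j}u + 2y_j∂_t u)² + (∂_{y_j}u − 2x_j∂_t u)²) = 4r²/( (s²−r²)·(ψ(r/s) − ψ(r_ε/s))² ). -/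

import Mathlib

/-!
Differentiating the identity `u² (φ(|z|/u) - φ(r_ε/u)) = t - φ(r_ε)` along an arbitrary line through
a point of `D` gives one linear equation for the derivative of `u` in that direction. Its
coefficients come from two facts on `(-1, 1)`: `φ'(r) = -2r²/√(1-r²)` and the identity
`2 φ(r) - r φ'(r) = ψ(r)`, by which `∂_s (s² φ(r/s)) = s ψ(r/s)`. With
`A = s (ψ(r/s) - ψ(r_ε/s))`, the equation is (`implicit_eq`)
`A · du(v) - 2 (r/√(s²-r²)) ∑ (x_j v_{x_j} + y_j v_{y_j}) = v_t`.
The direction `∂_t` gives `A · ∂_t u = 1`, so `A ≠ 0` needs no separate argument; the directions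
`∂_{x_j}` and `∂_{y_j}` then give the other derivatives. In the horizontal gradient the mixed terms
cancel, and `|∇_H u|² = 4 r² (1 + r²/(s²-r²)) / A²`.
-/

noncomputable section

/-- A point of `ℝ^{2n+1}`: coordinates `(x, y, t)`. -/
abbrev HPt (n : ℕ) := (Fin n → ℝ) × (Fin n → ℝ) × ℝ

/-- Euclidean norm of the horizontal component `z = (x,y)` of a point. -/
def zNorm {n : ℕ} (p : HPt n) : ℝ := Real.sqrt (∑ j, ((p.1 j) ^ 2 + (p.2.1 j) ^ 2))

/-- The profile function `φ(r) = arccos r + r √(1 - r²)`. -/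
def phi (r : ℝ) : ℝ := Real.arccos r + r * Real.sqrt (1 - r ^ 2)

/-- `ψ(r) = 2 (r/√(1-r²) + arccos r)`. -/
def psi (r : ℝ) : ℝ := 2 * (r / Real.sqrt (1 - r ^ 2) + Real.arccos r)

theorem hasDerivAt_phi {r : ℝ} (h0 : -1 < r) (h1 : r < 1) :
    HasDerivAt phi (-(2 * r ^ 2 / √(1 - r ^ 2))) r := by
  have hpos : 0 < 1 - r ^ 2 := by nlinarith
  have hs : 0 < √(1 - r ^ 2) := Real.sqrt_pos.2 hpos
  have hsq : √(1 - r ^ 2) ^ 2 = 1 - r ^ 2 := Real.sq_sqrt hpos.le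
  have hin : HasDerivAt (fun x : ℝ => 1 - x ^ 2) (-(2 * r)) r := by
    simpa using (hasDerivAt_pow 2 r).const_sub 1
  have h := (Real.hasDerivAt_arccos (by linarith : r ≠ -1) h1.ne).add
    ((hasDerivAt_id r).mul (hin.sqrt hpos.ne'))
  refine HasDerivAt.congr_deriv h ?_
  simp only [id]
  field_simp
  rw [hsq]
  ring

theorem two_phi_add {r : ℝ} (h0 : -1 < r) (h1 : r < 1) :
    2 * phi r + r * (2 * r ^ 2 / √(1 - r ^ 2)) = psi r := by
  have hpos : 0 < 1 - r ^ 2 := by nlinarith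
  have hs : 0 < √(1 - r ^ 2) := Real.sqrt_pos.2 hpos
  have hsq : √(1 - r ^ 2) ^ 2 = 1 - r ^ 2 := Real.sq_sqrt hpos.le
  unfold phi psi
  field_simp
  linear_combination r * hsq

/-- Chain rule for `s² φ(r/s)` when `r` and `s` depend on a real parameter: the coefficient of `s'`
is `s ψ(r/s)`, and that of `r'` is `s φ'(r/s) = -2r²/√(s²-r²)`. -/
theorem hasDerivAt_sq_mul_phi {R S : ℝ → ℝ} {R' S' h : ℝ} (hR : HasDerivAt R R' h)
    (hS : HasDerivAt S S' h) (h0 : 0 < R h) (h1 : R h < S h) :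
    HasDerivAt (fun x => S x ^ 2 * phi (R x / S x))
      (S h * psi (R h / S h) * S' - 2 * R h ^ 2 / √(S h ^ 2 - R h ^ 2) * R') h := by
  have hS0 : 0 < S h := h0.trans h1
  have hq0 : -1 < R h / S h := by have := div_pos h0 hS0; linarith
  have hq1 : R h / S h < 1 := (div_lt_one hS0).2 h1
  have hpos : 0 < S h ^ 2 - R h ^ 2 := by nlinarith
  have hs : 0 < √(S h ^ 2 - R h ^ 2) := Real.sqrt_pos.2 hpos
  have hroot : √(1 - (R h / S h) ^ 2) = √(S h ^ 2 - R h ^ 2) / S h := by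
    rw [show 1 - (R h / S h) ^ 2 = (S h ^ 2 - R h ^ 2) / S h ^ 2 by field_simp,
      Real.sqrt_div hpos.le, Real.sqrt_sq hS0.le]
  have hφ := HasDerivAt.comp (h₂ := phi) h (hasDerivAt_phi hq0 hq1) (hR.div hS hS0.ne')
  refine ((hS.pow 2).mul hφ).congr_deriv ?_
  simp only [Function.comp, Pi.div_apply, Pi.pow_apply]
  rw [← two_phi_add hq0 hq1, hroot]
  field_simp
  push_cast
  ring

theorem hasDerivAt_zNorm_line {n : ℕ} (p v : HPt n) (hp : 0 < zNorm p) :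
    HasDerivAt (fun h : ℝ => zNorm (p + h • v))
      ((∑ j, (p.1 j * v.1 j + p.2.1 j * v.2.1 j)) / zNorm p) 0 := by
  have hpos : 0 < ∑ j, ((p.1 j) ^ 2 + (p.2.1 j) ^ 2) := Real.sqrt_pos.1 hp
  have hsum : HasDerivAt
      (fun h : ℝ => ∑ j, ((p.1 j + h * v.1 j) ^ 2 + (p.2.1 j + h * v.2.1 j) ^ 2))
      (∑ j, (2 * (p.1 j * v.1 j) + 2 * (p.2.1 j * v.2.1 j))) 0 := by
    refine HasDerivAt.fun_sum fun j _ => ?_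
    have aux : ∀ a b : ℝ, HasDerivAt (fun h : ℝ => (a + h * b) ^ 2) (2 * (a * b)) 0 := by
      intro a b
      have := ((((hasDerivAt_id (0 : ℝ)).mul_const b).const_add a).pow 2)
      refine this.congr_deriv ?_
      simp
      ring
    exact (aux _ _).add (aux _ _)
  have h := hsum.sqrt (by simpa using hpos.ne')
  refine (h.congr_deriv ?_)
  simp only [zero_mul, add_zero]
  rw [show √(∑ j, ((p.1 j) ^ 2 + (p.2.1 j) ^ 2)) = zNorm p from rfl]
  rw [show ∑ j, (2 * (p.1 j * v.1 j) + 2 * (p.2.1 j * v.2.1 j))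
    = 2 * ∑ j, (p.1 j * v.1 j + p.2.1 j * v.2.1 j) by rw [Finset.mul_sum]; simp only [mul_add]]
  field_simp

/-- The derivative of the defining identity of `u` at `p` in the direction `v`. -/
theorem implicit_eq {n : ℕ} {c : ℝ} {D : Set (HPt n)} (hD : IsOpen D) {u : HPt n → ℝ} {p : HPt n}
    (hp : p ∈ D) (hu : DifferentiableAt ℝ u p) (hr0 : 0 < zNorm p) (hrc : zNorm p < c)
    (hc : c < u p)
    (hueq : ∀ q ∈ D, (u q) ^ 2 * (phi (zNorm q / u q) - phi (c / u q)) = q.2.2 - phi c)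
    (v : HPt n) :
    u p * (psi (zNorm p / u p) - psi (c / u p)) * fderiv ℝ u p v
      - 2 * (zNorm p / √((u p) ^ 2 - zNorm p ^ 2))
        * ∑ j, (p.1 j * v.1 j + p.2.1 j * v.2.1 j) = v.2.2 := by
  have hline : HasDerivAt (fun h : ℝ => p + h • v) v 0 := by
    simpa using ((hasDerivAt_id (0 : ℝ)).smul_const v).const_add p
  have hp0 : p + (0 : ℝ) • v = p := by simp
  have hS : HasDerivAt (fun h : ℝ => u (p + h • v)) (fderiv ℝ u p v) 0 := by
    have hu' : HasFDerivAt u (fderiv ℝ u p) (p + (0 : ℝ) • v) := by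
      rw [hp0]; exact hu.hasFDerivAt
    exact hu'.comp_hasDerivAt 0 hline
  have hR := hasDerivAt_zNorm_line p v hr0
  have h1 := hasDerivAt_sq_mul_phi hR hS (by simpa using hr0) (by simpa using hrc.trans hc)
  have h2 := hasDerivAt_sq_mul_phi (hasDerivAt_const (0 : ℝ) c) hS (hr0.trans hrc)
    (by simpa using hc)
  have hrhs : HasDerivAt (fun h : ℝ => p.2.2 + h * v.2.2 - phi c) v.2.2 0 := by
    simpa using (((hasDerivAt_id (0 : ℝ)).mul_const v.2.2).const_add p.2.2).sub_const (phi c)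
  have hev : ∀ᶠ h : ℝ in nhds 0, p + h • v ∈ D :=
    hline.continuousAt.eventually_mem (by rw [hp0]; exact hD.mem_nhds hp)
  have hlhs := hrhs.congr_of_eventuallyEq
    (f₁ := fun h : ℝ => u (p + h • v) ^ 2 * phi (zNorm (p + h • v) / u (p + h • v))
      - u (p + h • v) ^ 2 * phi (c / u (p + h • v)))
    (by
      filter_upwards [hev] with h hh
      rw [← mul_sub, hueq _ hh]
      simp)
  have key := (h1.sub h2).unique hlhs
  simp only [hp0] at key
  rw [← key]
  field_simp
  ring

/-- Derivatives of the implicit function `u` defining the sub-calibrating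
foliation: with `r = |z|` and `s = u(z,t)`,
`∂_t u = 1/(s(ψ(r/s) - ψ(r_ε/s)))`,
`∂_{x_j} u = 2x_j (r/√(s²-r²)) ∂_t u`, `∂_{y_j} u = 2y_j (r/√(s²-r²)) ∂_t u`,
and `|∇_H u|² = 4r²/((s²-r²)(ψ(r/s) - ψ(r_ε/s))²)`. -/
theorem implicit_function_derivatives (n : ℕ) (hn : 1 ≤ n) (ε : ℝ)
    (hε0 : 0 ≤ ε) (hε1 : ε < 1) (D : Set (HPt n)) (hD : IsOpen D)
    (hDsub : D ⊆ {p : HPt n | 0 < zNorm p ∧ zNorm p < 1 - ε ∧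
      phi (1 - ε) < p.2.2 ∧ p.2.2 < phi (zNorm p)})
    (u : HPt n → ℝ) (hu : ContDiffOn ℝ 1 u D)
    (hu1 : ∀ p ∈ D, 1 < u p)
    (hueq : ∀ p ∈ D,
      (u p) ^ 2 * (phi (zNorm p / u p) - phi ((1 - ε) / u p)) = p.2.2 - phi (1 - ε)) :
    ∀ p ∈ D,
      fderiv ℝ u p (0, 0, 1)
          = 1 / (u p * (psi (zNorm p / u p) - psi ((1 - ε) / u p)))
      ∧ (∀ j : Fin n,
          fderiv ℝ u p (Pi.single j 1, 0, 0)
            = 2 * p.1 j * (zNorm p / Real.sqrt ((u p) ^ 2 - zNorm p ^ 2))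
              * fderiv ℝ u p (0, 0, 1)
          ∧ fderiv ℝ u p (0, Pi.single j 1, 0)
            = 2 * p.2.1 j * (zNorm p / Real.sqrt ((u p) ^ 2 - zNorm p ^ 2))
              * fderiv ℝ u p (0, 0, 1))
      ∧ ∑ j : Fin n,
          ((fderiv ℝ u p (Pi.single j 1, 0, 0) + 2 * p.2.1 j * fderiv ℝ u p (0, 0, 1)) ^ 2
            + (fderiv ℝ u p (0, Pi.single j 1, 0) - 2 * p.1 j * fderiv ℝ u p (0, 0, 1)) ^ 2)
          = 4 * zNorm p ^ 2 / (((u p) ^ 2 - zNorm p ^ 2)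
              * (psi (zNorm p / u p) - psi ((1 - ε) / u p)) ^ 2) := by
  intro p hp
  obtain ⟨hr0, hrc, -, -⟩ := hDsub hp
  have hs1 := hu1 p hp
  have hcs : 1 - ε < u p := by linarith
  have hdiff : DifferentiableAt ℝ u p :=
    (hu.differentiableOn one_ne_zero).differentiableAt (hD.mem_nhds hp)
  have key := implicit_eq hD hp hdiff hr0 hrc hcs hueq
  have hrs : zNorm p < u p := hrc.trans hcs
  have hs0 : 0 < u p := hr0.trans hrs
  have hpos : 0 < (u p) ^ 2 - zNorm p ^ 2 := by nlinarith
  have hzsq : zNorm p ^ 2 = ∑ j, ((p.1 j) ^ 2 + (p.2.1 j) ^ 2) :=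
    Real.sq_sqrt (Finset.sum_nonneg fun j _ => by positivity)
  have hksq : (zNorm p / √((u p) ^ 2 - zNorm p ^ 2)) ^ 2
      = zNorm p ^ 2 / ((u p) ^ 2 - zNorm p ^ 2) := by
    rw [div_pow, Real.sq_sqrt hpos.le]
  have ht := key (0, 0, 1)
  have hx : ∀ j, _ := fun j => key (Pi.single j 1, 0, 0)
  have hy : ∀ j, _ := fun j => key (0, Pi.single j 1, 0)
  simp only [Pi.zero_apply, mul_zero, add_zero, zero_add, Finset.sum_const_zero, sub_zero,
    Pi.single_apply, mul_ite, mul_one, Finset.sum_ite_eq', Finset.mem_univ, if_true]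
    at ht hx hy
  generalize hk : zNorm p / √((u p) ^ 2 - zNorm p ^ 2) = k at *
  generalize hΔ : psi (zNorm p / u p) - psi ((1 - ε) / u p) = Δ at *
  generalize hT : fderiv ℝ u p (0, 0, 1) = T at *
  have hA : u p * Δ ≠ 0 := fun h => by simp [h] at ht
  have hX : ∀ j, fderiv ℝ u p (Pi.single j 1, 0, 0) = 2 * p.1 j * k * T := fun j =>
    mul_left_cancel₀ hA (by linear_combination hx j - 2 * p.1 j * k * ht)
  have hY : ∀ j, fderiv ℝ u p (0, Pi.single j 1, 0) = 2 * p.2.1 j * k * T := fun j =>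
    mul_left_cancel₀ hA (by linear_combination hy j - 2 * p.2.1 j * k * ht)
  have hTeq : T = 1 / (u p * Δ) := by
    rw [eq_div_iff hA, mul_comm]
    exact ht
  refine ⟨hTeq, fun j => ⟨hX j, hY j⟩, ?_⟩
  have hΔ0 : Δ ≠ 0 := right_ne_zero_of_mul hA
  calc _ = ∑ j, 4 * T ^ 2 * (k ^ 2 + 1) * ((p.1 j) ^ 2 + (p.2.1 j) ^ 2) := by
        refine Finset.sum_congr rfl fun j _ => ?_
        rw [hX, hY]
        ring
    _ = 4 * T ^ 2 * (k ^ 2 + 1) * zNorm p ^ 2 := by rw [← Finset.mul_sum, hzsq]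
    _ = _ := by
        have hne := hpos.ne'
        rw [hksq, hTeq]
        field_simp
        ring
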